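/- For every σ > 0 and every x ∈ ℝ, the integral defining g(x; σ²) converges and satisfies 0 ≤ g(x; σ²) ≤ 1. (Consequently, the constrained Barankin bound BB_c(x₀) = S σ² + (N − S) σ² · (1 − ∏_{l ∈ supp(x₀)} g(x₀_l; σ²)) always lies between S σ² and N σ².) -/

import Mathlib

open MeasureTheory ProbabilityTheory Filter
open scoped ENNReal Classical

/-- The product Gaussian measure `P_x` on `ℝ^N` with mean `x` and variance `σ²` per coordinate. -/
noncomputable def gaussP (N : ℕ) (σ : ℝ) (x : Fin N → ℝ) : Measure (Fin N → ℝ) :=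
  MeasureTheory.Measure.pi fun i => gaussianReal (x i) (Real.toNNReal (σ ^ 2))

/-- The support of `x`: indices with nonzero entries. Its cardinality is `‖x‖₀`. -/
noncomputable def supp {N : ℕ} (x : Fin N → ℝ) : Finset (Fin N) :=
  Finset.univ.filter fun i => x i ≠ 0

/-- The sparse parameter set `X_S = {x : ‖x‖₀ ≤ S}`. -/
def sparseSet (N S : ℕ) : Set (Fin N → ℝ) := {x | (supp x).card ≤ S}

/-- An estimator is unbiased if each component is `P_x`-integrable with mean `x i`
for every `x ∈ X_S`. -/
def Unbiased (N S : ℕ) (σ : ℝ) (est : (Fin N → ℝ) → Fin N → ℝ) : Prop :=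
  ∀ x ∈ sparseSet N S, ∀ i,
    Integrable (fun y => est y i) (gaussP N σ x) ∧
    (∫ y, est y i ∂gaussP N σ x) = x i

/-- The MSE `ε(x; x̂) = ∫ ‖x̂(y) − x‖₂² dP_x(y)`, as an extended real. -/
noncomputable def MSE (N : ℕ) (σ : ℝ) (est : (Fin N → ℝ) → Fin N → ℝ)
    (x : Fin N → ℝ) : ℝ≥0∞ :=
  ∫⁻ y, ENNReal.ofReal (∑ i, (est y i - x i) ^ 2) ∂gaussP N σ x

/-- `g(x; σ²) = (2/√(2πσ²)) ∫₀^∞ exp(−(y²+x²)/(2σ²)) sinh(yx/σ²) tanh(yx/σ²) dy`. -/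
noncomputable def g (σ x : ℝ) : ℝ :=
  (2 / Real.sqrt (2 * Real.pi * σ ^ 2)) *
    ∫ y in Set.Ioi (0 : ℝ),
      Real.exp (-(y ^ 2 + x ^ 2) / (2 * σ ^ 2)) * Real.sinh (y * x / σ ^ 2) *
        Real.tanh (y * x / σ ^ 2)

theorem aux_gauss_shift (σ : ℝ) (hσ : 0 < σ) (x : ℝ) :
    Integrable (fun y : ℝ => Real.exp (-(1 / (2 * σ ^ 2)) * (y - x) ^ 2)) ∧
    ∫ y : ℝ, Real.exp (-(1 / (2 * σ ^ 2)) * (y - x) ^ 2) = Real.sqrt (2 * Real.pi * σ ^ 2) := by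
  have hb : 0 < 1 / (2 * σ ^ 2) := by positivity
  constructor
  · exact (integrable_exp_neg_mul_sq hb).comp_sub_right x
  · rw [integral_sub_right_eq_self (fun y : ℝ => Real.exp (-(1 / (2 * σ ^ 2)) * y ^ 2)) x,
      integral_gaussian]
    congr 1
    field_simp

theorem aux_cosh_eq (σ : ℝ) (hσ : 0 < σ) (x y : ℝ) :
    Real.exp (-(y ^ 2 + x ^ 2) / (2 * σ ^ 2)) * Real.cosh (y * x / σ ^ 2) =
      (1 / 2) * (Real.exp (-(1 / (2 * σ ^ 2)) * (y - x) ^ 2) +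
        Real.exp (-(1 / (2 * σ ^ 2)) * (y - (-x)) ^ 2)) := by
  have h1 : -(1 / (2 * σ ^ 2)) * (y - x) ^ 2 =
      -(y ^ 2 + x ^ 2) / (2 * σ ^ 2) + y * x / σ ^ 2 := by field_simp; ring
  have h2 : -(1 / (2 * σ ^ 2)) * (y - (-x)) ^ 2 =
      -(y ^ 2 + x ^ 2) / (2 * σ ^ 2) + -(y * x / σ ^ 2) := by field_simp; ring
  rw [h1, h2, Real.exp_add, Real.exp_add, Real.cosh_eq]
  ring

theorem aux_cosh_int (σ : ℝ) (hσ : 0 < σ) (x : ℝ) :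
    Integrable (fun y : ℝ =>
      Real.exp (-(y ^ 2 + x ^ 2) / (2 * σ ^ 2)) * Real.cosh (y * x / σ ^ 2)) ∧
    2 * ∫ y in Set.Ioi (0 : ℝ),
      Real.exp (-(y ^ 2 + x ^ 2) / (2 * σ ^ 2)) * Real.cosh (y * x / σ ^ 2)
      = Real.sqrt (2 * Real.pi * σ ^ 2) := by
  obtain ⟨i1, e1⟩ := aux_gauss_shift σ hσ x
  obtain ⟨i2, e2⟩ := aux_gauss_shift σ hσ (-x)
  constructor
  · simp_rw [aux_cosh_eq σ hσ x]
    exact (i1.add i2).const_mul _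
  · rw [← integral_comp_abs (f := fun y : ℝ =>
      Real.exp (-(y ^ 2 + x ^ 2) / (2 * σ ^ 2)) * Real.cosh (y * x / σ ^ 2))]
    have : ∀ y : ℝ, Real.exp (-(|y| ^ 2 + x ^ 2) / (2 * σ ^ 2)) * Real.cosh (|y| * x / σ ^ 2)
        = Real.exp (-(y ^ 2 + x ^ 2) / (2 * σ ^ 2)) * Real.cosh (y * x / σ ^ 2) := by
      intro y
      rcases abs_choice y with h | h <;> rw [h]
      rw [neg_sq, neg_mul, neg_div _ (y * x), Real.cosh_neg]
    simp_rw [this, aux_cosh_eq σ hσ x]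
    rw [integral_const_mul, integral_add i1 i2, e1, e2]
    ring

theorem aux_st (t : ℝ) : 0 ≤ Real.sinh t * Real.tanh t ∧
    Real.sinh t * Real.tanh t ≤ Real.cosh t := by
  have hc := Real.cosh_pos t
  have h := Real.cosh_sq t
  have e : Real.sinh t * Real.tanh t = Real.sinh t ^ 2 / Real.cosh t := by
    rw [Real.tanh_eq_sinh_div_cosh]; ring
  rw [e]
  refine ⟨by positivity, ?_⟩
  rw [div_le_iff₀ hc]
  nlinarith

theorem aux_main (σ : ℝ) (hσ : 0 < σ) (x : ℝ) :
    MeasureTheory.IntegrableOn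
      (fun y => Real.exp (-(y ^ 2 + x ^ 2) / (2 * σ ^ 2)) * Real.sinh (y * x / σ ^ 2) *
        Real.tanh (y * x / σ ^ 2)) (Set.Ioi (0 : ℝ)) ∧
    0 ≤ g σ x ∧ g σ x ≤ 1 := by
  obtain ⟨ic, ec⟩ := aux_cosh_int σ hσ x
  have h0 : ∀ y : ℝ, 0 ≤ Real.exp (-(y ^ 2 + x ^ 2) / (2 * σ ^ 2)) * Real.sinh (y * x / σ ^ 2) *
        Real.tanh (y * x / σ ^ 2) := fun y => by
    rw [mul_assoc]; exact mul_nonneg (Real.exp_pos _).le (aux_st _).1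
  have h1 : ∀ y : ℝ, Real.exp (-(y ^ 2 + x ^ 2) / (2 * σ ^ 2)) * Real.sinh (y * x / σ ^ 2) *
        Real.tanh (y * x / σ ^ 2) ≤
        Real.exp (-(y ^ 2 + x ^ 2) / (2 * σ ^ 2)) * Real.cosh (y * x / σ ^ 2) := fun y => by
    rw [mul_assoc]; exact mul_le_mul_of_nonneg_left (aux_st _).2 (Real.exp_pos _).le
  have hi : Integrable (fun y => Real.exp (-(y ^ 2 + x ^ 2) / (2 * σ ^ 2)) *
      Real.sinh (y * x / σ ^ 2) * Real.tanh (y * x / σ ^ 2)) := by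
    refine ic.mono' ?_ (Eventually.of_forall fun y => ?_)
    · apply Continuous.aestronglyMeasurable
      simp_rw [Real.tanh_eq_sinh_div_cosh]
      refine Continuous.mul (by fun_prop) (Continuous.div (by fun_prop) (by fun_prop) ?_)
      exact fun y => (Real.cosh_pos _).ne'
    · rw [Real.norm_of_nonneg (h0 y)]; exact h1 y
  have hs : 0 < Real.sqrt (2 * Real.pi * σ ^ 2) := Real.sqrt_pos.2 (by positivity)
  refine ⟨hi.integrableOn, ?_, ?_⟩
  · exact mul_nonneg (by positivity) (integral_nonneg h0)
  · have := integral_mono (μ := volume.restrict (Set.Ioi (0 : ℝ))) hi.integrableOn ic.integrableOn h1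
    unfold g
    rw [div_mul_eq_mul_div, div_le_one hs]
    linarith

/-- The integral defining `g(x; σ²)` converges, and `0 ≤ g(x; σ²) ≤ 1`. Consequently the
constrained Barankin bound `BB_c(x₀)` always lies between `S σ²` and `N σ²`. -/
theorem stmt_14 (σ : ℝ) (hσ : 0 < σ) (x : ℝ) :
    MeasureTheory.IntegrableOn
      (fun y => Real.exp (-(y ^ 2 + x ^ 2) / (2 * σ ^ 2)) * Real.sinh (y * x / σ ^ 2) *
        Real.tanh (y * x / σ ^ 2)) (Set.Ioi (0 : ℝ)) ∧
    0 ≤ g σ x ∧ g σ x ≤ 1 ∧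
    ∀ (N S : ℕ), S ≤ N → ∀ x₀ : Fin N → ℝ,
      (S : ℝ) * σ ^ 2
          ≤ (S : ℝ) * σ ^ 2 + ((N : ℝ) - S) * σ ^ 2 * (1 - ∏ l ∈ supp x₀, g σ (x₀ l)) ∧
      (S : ℝ) * σ ^ 2 + ((N : ℝ) - S) * σ ^ 2 * (1 - ∏ l ∈ supp x₀, g σ (x₀ l))
          ≤ (N : ℝ) * σ ^ 2 := by
  obtain ⟨a, b, c⟩ := aux_main σ hσ x
  refine ⟨a, b, c, fun N S hSN x₀ => ?_⟩
  have p0 : 0 ≤ ∏ l ∈ supp x₀, g σ (x₀ l) :=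
    Finset.prod_nonneg fun l _ => (aux_main σ hσ (x₀ l)).2.1
  have p1 : ∏ l ∈ supp x₀, g σ (x₀ l) ≤ 1 :=
    Finset.prod_le_one (fun l _ => (aux_main σ hσ (x₀ l)).2.1)
      fun l _ => (aux_main σ hσ (x₀ l)).2.2
  have hn : (0 : ℝ) ≤ ((N : ℝ) - S) * σ ^ 2 :=
    mul_nonneg (sub_nonneg.2 (by exact_mod_cast hSN)) (by positivity)
  constructor
  · have := mul_nonneg hn (sub_nonneg.2 p1)
    linarith
  · have := mul_nonneg hn p0
    linarith
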